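/- Let 0 < γ < 2 and let n ≥ 1 be an integer. Define the polynomials P1(n,v) = (2n+γ)v³ − (2n+4+γ)v² + (2n+4+γ)v − (2n+γ), P2(n,v) = −(2n+γ)v³ + (6n+4−γ)v² + (6n+4−γ)v − (2n+γ), P3(n,v) = (2n+γ)v³ + (6n+4−γ)v² − (6n+4−γ)v − (2n+γ), P4(n,v) = −(2n+γ)v³ − (2n+4+γ)v² − (2n+4+γ)v − (2n+γ), and F(n,u,v) = (v+1)(u·P1(n,v) + P2(n,v)) / ((v−1)(u·P3(n,v) + P4(n,v))). Then for all u, v ∈ [0,1] with v ≠ 1 and u·P3(n,v) + P4(n,v) ≠ 0, one has F(n,u,v) ≥ −1. -/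

import Mathlib

/-!
Put `a = 2n + γ` and `b = 2n + 2 - γ`. When `a, b ≥ 0`, factoring `P3` and `P4` shows that both are
nonpositive on `[0, 1]`, so the denominator of `F` is nonnegative. Over this denominator, the
numerator of `F + 1` is affine in `u`, with the values
`2v (b (1 + v)² + (2 + a v)(1 - v²))` at `u = 0` and `4v (b (1 + v²) + 2 (1 - v²))` at `u = 1`,
both nonnegative.
-/

noncomputable section

def P1 (γ : ℝ) (n : ℕ) (v : ℝ) : ℝ :=
  (2*(n:ℝ) + γ) * v^3 - (2*(n:ℝ) + 4 + γ) * v^2 + (2*(n:ℝ) + 4 + γ) * v - (2*(n:ℝ) + γ)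

def P2 (γ : ℝ) (n : ℕ) (v : ℝ) : ℝ :=
  -(2*(n:ℝ) + γ) * v^3 + (6*(n:ℝ) + 4 - γ) * v^2 + (6*(n:ℝ) + 4 - γ) * v - (2*(n:ℝ) + γ)

def P3 (γ : ℝ) (n : ℕ) (v : ℝ) : ℝ :=
  (2*(n:ℝ) + γ) * v^3 + (6*(n:ℝ) + 4 - γ) * v^2 - (6*(n:ℝ) + 4 - γ) * v - (2*(n:ℝ) + γ)

def P4 (γ : ℝ) (n : ℕ) (v : ℝ) : ℝ :=
  -(2*(n:ℝ) + γ) * v^3 - (2*(n:ℝ) + 4 + γ) * v^2 - (2*(n:ℝ) + 4 + γ) * v - (2*(n:ℝ) + γ)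

/-- The recurrence function `F(n,u,v)` of the discrete Painlevé equation in the
coordinates `u = tan(α/2)`. -/
def F (γ : ℝ) (n : ℕ) (u v : ℝ) : ℝ :=
  (v + 1) * (u * P1 γ n v + P2 γ n v) / ((v - 1) * (u * P3 γ n v + P4 γ n v))

section

variable {γ u v : ℝ} {n : ℕ}

lemma P3_eq_neg_mul :
    P3 γ n v = -((1 - v) * ((2 * n + γ) * (1 + v) ^ 2 + 2 * (2 * n + 2 - γ) * v)) := by
  unfold P3
  ring

lemma P4_eq_neg_mul : P4 γ n v = -((1 + v) * ((2 * n + γ) * (1 + v ^ 2) + 4 * v)) := by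
  unfold P4
  ring

lemma P3_nonpos (ha : 0 ≤ 2 * n + γ) (hb : 0 ≤ 2 * n + 2 - γ) (hv : v ∈ Set.Icc 0 1) :
    P3 γ n v ≤ 0 := by
  obtain ⟨hv0, hv1⟩ := hv
  rw [P3_eq_neg_mul, neg_nonpos]
  exact mul_nonneg (sub_nonneg.2 hv1) (by positivity)

lemma P4_nonpos (ha : 0 ≤ 2 * n + γ) (hv : 0 ≤ v) : P4 γ n v ≤ 0 := by
  rw [P4_eq_neg_mul, neg_nonpos]
  positivity

lemma F_denominator_nonneg (ha : 0 ≤ 2 * n + γ) (hb : 0 ≤ 2 * n + 2 - γ) (hu : 0 ≤ u)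
    (hv : v ∈ Set.Icc 0 1) : 0 ≤ (v - 1) * (u * P3 γ n v + P4 γ n v) :=
  mul_nonneg_of_nonpos_of_nonpos (sub_nonpos.2 hv.2) <|
    add_nonpos (mul_nonpos_of_nonneg_of_nonpos hu (P3_nonpos ha hb hv)) (P4_nonpos ha hv.1)

lemma F_add_one_eq_div (hv1 : v ≠ 1) (hden : u * P3 γ n v + P4 γ n v ≠ 0) :
    F γ n u v + 1 =
      ((1 - u) * (2 * v * ((2 * n + 2 - γ) * (1 + v) ^ 2 + (2 + (2 * n + γ) * v) * (1 - v ^ 2))) +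
          u * (4 * v * ((2 * n + 2 - γ) * (1 + v ^ 2) + 2 * (1 - v ^ 2)))) /
        ((v - 1) * (u * P3 γ n v + P4 γ n v)) := by
  rw [F, div_add_one (mul_ne_zero (sub_ne_zero.2 hv1) hden)]
  congr 1
  unfold P1 P2 P3 P4
  ring

theorem F_ge_neg_one_general (ha : 0 ≤ 2 * n + γ) (hb : 0 ≤ 2 * n + 2 - γ)
    (hu : u ∈ Set.Icc 0 1) (hv : v ∈ Set.Icc 0 1) (hv1 : v ≠ 1)
    (hden : u * P3 γ n v + P4 γ n v ≠ 0) : -1 ≤ F γ n u v := by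
  have hD := F_denominator_nonneg ha hb hu.1 hv
  obtain ⟨hu0, hu1⟩ := hu
  obtain ⟨hv0, hv_le⟩ := hv
  have h1u : 0 ≤ 1 - u := sub_nonneg.2 hu1
  have h1v : 0 ≤ 1 - v ^ 2 := sub_nonneg.2 (pow_le_one₀ hv0 hv_le)
  rw [neg_le_iff_add_nonneg, F_add_one_eq_div hv1 hden]
  refine div_nonneg (add_nonneg (mul_nonneg h1u ?_) (mul_nonneg hu0 ?_)) hD <;> positivity

end

/-- On the unit square the recurrence function `F` takes values `≥ -1`. -/
theorem F_ge_neg_one (γ : ℝ) (hγ0 : 0 < γ) (hγ2 : γ < 2) (n : ℕ) (hn : 1 ≤ n)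
    (u v : ℝ) (hu : u ∈ Set.Icc (0:ℝ) 1) (hv : v ∈ Set.Icc (0:ℝ) 1)
    (hv1 : v ≠ 1) (hden : u * P3 γ n v + P4 γ n v ≠ 0) :
    -1 ≤ F γ n u v := by
  have hn' : (1 : ℝ) ≤ n := by exact_mod_cast hn
  exact F_ge_neg_one_general (by linarith) (by linarith) hu hv hv1 hden

end
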